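/- Let f, g: S^1 → ℝ^2 be continuous. If there exist generic functions f', g': S^1 → ℝ^2 such that H_0^{u,v}(s∘f') = H_0^{u,v}(s∘g') for every (u,v) ∈ Δ^+ and every s ∈ Σ_2, then there exists a C^1-diffeomorphism h: S^1 → S^1 such that ‖g∘h − f‖_∞ ≤ ‖g − g'‖_∞ + ‖f' − f‖_∞. -/

import Mathlib

open Set Real Filter Topology

noncomputable section

abbrev Circ := AddCircle (2 * π)

def liftOf (F : Circ → ℝ × ℝ) : ℝ → ℝ × ℝ := fun t => F (t : Circ)

def IsC1 (F : Circ → ℝ × ℝ) : Prop := ContDiff ℝ 1 (liftOf F)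

def tangentAt (F : Circ → ℝ × ℝ) (t : ℝ) : Submodule ℝ (ℝ × ℝ) :=
  Submodule.span ℝ {deriv (liftOf F) t}

def Generic (F : Circ → ℝ × ℝ) : Prop :=
  IsC1 F ∧ (∀ t : ℝ, deriv (liftOf F) t ≠ 0) ∧
  {p : ℝ × ℝ | ∃ x y : Circ, x ≠ y ∧ F x = p ∧ F y = p}.Finite ∧
  (∀ p : ℝ × ℝ, (∃ x y : Circ, x ≠ y ∧ F x = p ∧ F y = p) →
    ∃ x y : Circ, x ≠ y ∧ {z : Circ | F z = p} = {x, y}) ∧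
  (∀ t₁ t₂ : ℝ, liftOf F t₁ = liftOf F t₂ → tangentAt F t₁ = tangentAt F t₂ →
    (t₁ : Circ) = (t₂ : Circ))

def Dset (u : ℝ × ℝ) : Set (ℝ × ℝ) := {w | w.1 ≤ u.1 ∧ w.2 ≤ u.2}

def persBetti (F : Circ → ℝ × ℝ) (u v : ℝ × ℝ) : ℕ :=
  ((fun x => connectedComponentIn (F ⁻¹' Dset v) x) '' (F ⁻¹' Dset u)).ncard

def Sigma2 : Set ((ℝ × ℝ) → (ℝ × ℝ)) :=
  {id, fun p => (-p.1, p.2), fun p => (p.1, -p.2), fun p => (-p.1, -p.2)}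

def CircleDiffeo (H : Circ → Circ) : Prop :=
  ∃ h : ℝ → ℝ, ContDiff ℝ 1 h ∧ (∀ t, deriv h t ≠ 0) ∧
    ((∀ t, h (t + 2 * π) = h t + 2 * π) ∨ (∀ t, h (t + 2 * π) = h t - 2 * π)) ∧
    (∀ t : ℝ, H (t : Circ) = ((h t : ℝ) : Circ))

def C1dist (F G : Circ → ℝ × ℝ) : ℝ :=
  ⨆ t : ℝ, (‖liftOf F t - liftOf G t‖ + ‖deriv (liftOf F) t - deriv (liftOf G) t‖)

def cross (a b : ℝ × ℝ) : ℝ := a.1 * b.2 - a.2 * b.1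

/-!
The alternating sum `β(u, v) - β((a₁, u₂), v) - β((u₁, a₂), v) + β(a, v)` of persistent Betti
numbers probes the box `a < w ≤ u`. It is at most `0` for a curve that misses the box, by
inclusion-exclusion for the components that meet a sublevel set. It is positive when the part of the
curve in `a < w ≤ v` is a single closed arc entering the box on which one coordinate increases and
the other decreases, since that arc is a component of the `v`-sublevel set by itself. Thus the Betti
numbers of `F` detect its simple points whose velocity has coordinates of opposite signs, and those
of the reflected curve detect the simple points whose velocity has coordinates of equal signs.

Passing to the limit, if `F` and `G` have the same Betti numbers, then at every parameter where the
velocity of `F` is oblique, `F` touches `G`: they share the point and the tangent line, and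
cleanness makes the partner parameter on `G` unique. Near a contact, let `φ` match the values of a
linear functional along `F` and `G`. At matched parameters the velocities are parallel, either
because one of them is oblique and a contact occurs there, or because both are parallel to the same
axis. Hence `G ∘ φ - F` has zero derivative, so contacts persist. By connectedness every parameter
has a contact, and the contacts form the graph of a diffeomorphism `h` with `G ∘ h = F`. For curves
approximated by `F` and `G` the triangle inequality gives the bound.
-/

instance fact_two_pi_pos : Fact (0 < 2 * π) := ⟨two_pi_pos⟩

theorem isQuotientMap_coe : IsQuotientMap ((↑) : ℝ → Circ) := isQuotientMap_quotient_mk'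

instance locallyConnectedSpace_circ : LocallyConnectedSpace Circ :=
  have := isQuotientMap_coe.locallyPathConnectedSpace
  inferInstance

section CompactFiber

theorem exists_frequently_prod_nhds {α Y : Type*} [TopologicalSpace Y] [CompactSpace Y]
    {l : Filter α} {P : α → Y → Prop} (h : ∃ᶠ a in l, ∃ y, P a y) :
    ∃ y, ∃ᶠ p in l ×ˢ 𝓝 y, P p.1 p.2 := by
  by_contra! hP
  have hprod : {p : α × Y | ¬ P p.1 p.2} ∈ l ×ˢ 𝓝ˢ univ :=
    isCompact_univ.mem_prod_nhdsSet_of_forall fun y _ => hP y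
  rw [nhdsSet_univ, mem_prod_top] at hprod
  exact h (Eventually.mono hprod fun a ha ⟨y, hy⟩ => ha y hy)

theorem frequently_prod_nhds_coe {α : Type*} {l : Filter α} {P : α × Circ → Prop} {s : ℝ} :
    (∃ᶠ p in l ×ˢ 𝓝 (s : Circ), P p) ↔ ∃ᶠ p in l ×ˢ 𝓝 s, P (p.1, (p.2 : ℝ)) := by
  rw [QuotientAddGroup.nhds_eq, prod_map_right, frequently_map]
  rfl

theorem continuous_of_isClosed_graph {X Y : Type*} [TopologicalSpace X] [TopologicalSpace Y]
    [CompactSpace Y] {f : X → Y} (hf : IsClosed {p : X × Y | f p.1 = p.2}) : Continuous f := by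
  refine continuous_iff_isClosed.2 fun C hC => ?_
  convert isClosedMap_fst_of_compactSpace _ (hf.inter (hC.preimage continuous_snd))
  ext x
  simp

end CompactFiber

section SupNorm

theorem bddAbove_range_norm_sub {α E : Type*} [SeminormedAddCommGroup E] {f g : α → E}
    (hf : Bornology.IsBounded (range f)) (hg : Bornology.IsBounded (range g)) :
    BddAbove (range fun x => ‖f x - g x‖) := by
  obtain ⟨a, ha⟩ := hf.exists_norm_le
  obtain ⟨b, hb⟩ := hg.exists_norm_le
  refine ⟨a + b, forall_mem_range.2 fun x => (norm_sub_le _ _).trans ?_⟩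
  exact add_le_add (ha _ (mem_range_self x)) (hb _ (mem_range_self x))

theorem iSup_norm_comp_sub_le {α β E : Type*} [Nonempty α] [SeminormedAddCommGroup E]
    {f f' : α → E} {g g' : β → E} {H : α → β} (hH : ∀ x, g' (H x) = f' x)
    (hg : BddAbove (range fun y => ‖g y - g' y‖)) (hf : BddAbove (range fun x => ‖f' x - f x‖)) :
    (⨆ x, ‖g (H x) - f x‖) ≤ (⨆ y, ‖g y - g' y‖) + ⨆ x, ‖f' x - f x‖ :=
  ciSup_le fun x => calc
    ‖g (H x) - f x‖ ≤ ‖g (H x) - g' (H x)‖ + ‖g' (H x) - f x‖ :=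
      norm_sub_le_norm_sub_add_norm_sub ..
    _ ≤ _ := add_le_add (le_ciSup hg (H x)) (hH x ▸ le_ciSup hf x)

end SupNorm

section Components

variable {X : Type*} [TopologicalSpace X]

theorem finite_image_connectedComponentIn [LocallyConnectedSpace X] {K U S : Set X}
    (hK : IsCompact K) (hU : IsOpen U) (hKU : K ⊆ U) (hUS : U ⊆ S) :
    (connectedComponentIn S '' K).Finite := by
  obtain ⟨t, htK, hKt⟩ := hK.elim_nhds_subcover (connectedComponentIn U)
    fun x hx => hU.connectedComponentIn.mem_nhds (mem_connectedComponentIn (hKU hx))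
  refine (t.finite_toSet.image (connectedComponentIn S)).subset ?_
  rintro _ ⟨x, hx, rfl⟩
  obtain ⟨y, hy, hxy⟩ := mem_iUnion₂.1 (hKt hx)
  refine ⟨y, hy, connectedComponentIn_eq ?_⟩
  exact isPreconnected_connectedComponentIn.subset_connectedComponentIn
    (mem_connectedComponentIn (hKU (htK y hy))) ((connectedComponentIn_subset _ _).trans hUS) hxy

theorem ncard_image_union_add_ncard_image_inter_le {α β : Type*} (p : α → β) {P Q : Set α}
    (hP : (p '' P).Finite) (hQ : (p '' Q).Finite) :
    (p '' (P ∪ Q)).ncard + (p '' (P ∩ Q)).ncard ≤ (p '' P).ncard + (p '' Q).ncard := by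
  rw [← ncard_union_add_ncard_inter _ _ hP hQ, image_union]
  exact Nat.add_le_add_left
    (ncard_le_ncard (image_inter_subset p P Q) (hP.inter_of_left _)) _

theorem connectedComponentIn_eq_of_isClosed_cover {S C T : Set X} {x : X} (hC : IsClosed C)
    (hT : IsClosed T) (hCT : Disjoint C T) (hCconn : IsPreconnected C) (hCS : C ⊆ S)
    (hS : S ⊆ C ∪ T) (hx : x ∈ C) : connectedComponentIn S x = C := by
  refine Subset.antisymm ?_ (hCconn.subset_connectedComponentIn hx hCS)
  rcases isPreconnected_iff_subset_of_disjoint_closed.1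
    (isPreconnected_connectedComponentIn (F := S) (x := x)) C T hC hT
    ((connectedComponentIn_subset S x).trans hS) (by rw [hCT.inter_eq, inter_empty]) with h | h
  · exact h
  · exact (disjoint_left.1 hCT hx (h (mem_connectedComponentIn (hCS hx)))).elim

theorem ncard_image_connectedComponentIn_add_lt {S K A B C : Set X} (hA : IsClosed A)
    (hB : IsClosed B) (hC : IsClosed C) (hCconn : IsPreconnected C) (hCS : C ⊆ S)
    (hS : S ⊆ C ∪ (A ∪ B)) (hdisj : Disjoint C (A ∪ B)) (hKS : K ⊆ S)
    (hABK : S ∩ (A ∩ B) ⊆ K) (hKC : (K ∩ C).Nonempty)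
    (hfin : (connectedComponentIn S '' K).Finite) :
    (connectedComponentIn S '' (K ∩ A)).ncard + (connectedComponentIn S '' (K ∩ B)).ncard <
      (connectedComponentIn S '' K).ncard + (connectedComponentIn S '' (K ∩ (A ∩ B))).ncard := by
  have hcomp {x : X} (hx : x ∈ C) : connectedComponentIn S x = C :=
    connectedComponentIn_eq_of_isClosed_cover hC (hA.union hB) hdisj hCconn hCS hS hx
  have hfinA := hfin.subset (image_mono (inter_subset_left (t := A)))
  have hfinB := hfin.subset (image_mono (inter_subset_left (t := B)))
  have hunion : connectedComponentIn S '' (K ∩ A) ∪ connectedComponentIn S '' (K ∩ B) ⊂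
      connectedComponentIn S '' K := by
    rw [← image_union, ← inter_union_distrib_left]
    obtain ⟨c, hcK, hcC⟩ := hKC
    refine (image_mono inter_subset_left).ssubset_of_mem_notMem (mem_image_of_mem _ hcK) ?_
    rintro ⟨x, ⟨hxK, hxAB⟩, hx⟩
    exact disjoint_right.1 hdisj hxAB
      ((hx.trans (hcomp hcC)).subset (mem_connectedComponentIn (hKS hxK)))
  -- A component meeting both `A` and `B` avoids `C`, so it is covered by `A ∪ B` and, being
  -- connected, meets `A ∩ B`.
  have hinter : connectedComponentIn S '' (K ∩ A) ∩ connectedComponentIn S '' (K ∩ B) ⊆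
      connectedComponentIn S '' (K ∩ (A ∩ B)) := by
    rintro _ ⟨⟨x, ⟨hxK, hxA⟩, rfl⟩, y, ⟨hyK, hyB⟩, hyx⟩
    have hmem : x ∈ connectedComponentIn S x := mem_connectedComponentIn (hKS hxK)
    have hcover : connectedComponentIn S x ⊆ A ∪ B := fun z hz =>
      (hS (connectedComponentIn_subset S x hz)).resolve_left fun hzC =>
        disjoint_right.1 hdisj (Or.inl hxA)
          (((connectedComponentIn_eq hz).trans (hcomp hzC)).subset hmem)
    obtain ⟨z, hz, hzAB⟩ := isPreconnected_closed_iff.1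
      (isPreconnected_connectedComponentIn (F := S) (x := x)) A B hA hB hcover
      ⟨x, hmem, hxA⟩ ⟨y, hyx.subset (mem_connectedComponentIn (hKS hyK)), hyB⟩
    exact ⟨z, ⟨hABK ⟨connectedComponentIn_subset S x hz, hzAB⟩, hzAB⟩,
      (connectedComponentIn_eq hz).symm⟩
  rw [← ncard_union_add_ncard_inter _ _ hfinA hfinB]
  exact add_lt_add_of_lt_of_le (ncard_lt_ncard hunion hfin)
    (ncard_le_ncard hinter (hfin.subset (image_mono inter_subset_left)))

end Components

section PersistentBetti

variable {F G : Circ → ℝ × ℝ} {a u v : ℝ × ℝ}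

theorem isClosed_Dset (u : ℝ × ℝ) : IsClosed (Dset u) :=
  (isClosed_le continuous_fst continuous_const).inter (isClosed_le continuous_snd continuous_const)

theorem Dset_subset_Dset (h₁ : u.1 ≤ v.1) (h₂ : u.2 ≤ v.2) : Dset u ⊆ Dset v :=
  fun _ hw => ⟨hw.1.trans h₁, hw.2.trans h₂⟩

theorem finite_image_connectedComponentIn_Dset (hF : Continuous F) (h₁ : u.1 < v.1)
    (h₂ : u.2 < v.2) : (connectedComponentIn (F ⁻¹' Dset v) '' (F ⁻¹' Dset u)).Finite :=
  finite_image_connectedComponentIn (U := F ⁻¹' (Iio v.1 ×ˢ Iio v.2))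
    ((isClosed_Dset u).preimage hF).isCompact ((isOpen_Iio.prod isOpen_Iio).preimage hF)
    (fun _ hx => ⟨hx.1.trans_lt h₁, hx.2.trans_lt h₂⟩) (fun _ hx => ⟨hx.1.le, hx.2.le⟩)

theorem Dset_fst_snd_eq (h : a.1 ≤ u.1) : Dset (a.1, u.2) = Dset u ∩ {w | w.1 ≤ a.1} :=
  Set.ext fun _ => ⟨fun hw => ⟨⟨hw.1.trans h, hw.2⟩, hw.1⟩, fun hw => ⟨hw.2, hw.1.2⟩⟩

theorem Dset_snd_fst_eq (h : a.2 ≤ u.2) : Dset (u.1, a.2) = Dset u ∩ {w | w.2 ≤ a.2} :=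
  Set.ext fun _ => ⟨fun hw => ⟨⟨hw.1, hw.2.trans h⟩, hw.2⟩, fun hw => ⟨hw.1.1, hw.2⟩⟩

theorem Dset_eq_inter (h₁ : a.1 ≤ u.1) (h₂ : a.2 ≤ u.2) :
    Dset a = Dset u ∩ ({w | w.1 ≤ a.1} ∩ {w | w.2 ≤ a.2}) :=
  (inter_eq_right.2 (Dset_subset_Dset h₁ h₂)).symm

theorem persBetti_add_le_of_forall (hG : Continuous G) (ha₁ : a.1 ≤ u.1) (ha₂ : a.2 ≤ u.2)
    (hu₁ : u.1 < v.1) (hu₂ : u.2 < v.2)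
    (hbox : ∀ x, G x ∈ Dset u → (G x).1 ≤ a.1 ∨ (G x).2 ≤ a.2) :
    persBetti G u v + persBetti G a v ≤
      persBetti G (a.1, u.2) v + persBetti G (u.1, a.2) v := by
  have hunion : G ⁻¹' Dset u = G ⁻¹' Dset (a.1, u.2) ∪ G ⁻¹' Dset (u.1, a.2) := by
    rw [Dset_fst_snd_eq ha₁, Dset_snd_fst_eq ha₂, ← preimage_union, ← inter_union_distrib_left,
      preimage_inter]
    exact (inter_eq_left.2 hbox).symm
  have hinter : G ⁻¹' Dset a = G ⁻¹' Dset (a.1, u.2) ∩ G ⁻¹' Dset (u.1, a.2) := by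
    rw [Dset_fst_snd_eq ha₁, Dset_snd_fst_eq ha₂, ← preimage_inter, ← inter_inter_distrib_left,
      Dset_eq_inter ha₁ ha₂]
  unfold persBetti
  rw [hunion, hinter]
  exact ncard_image_union_add_ncard_image_inter_le _
    (finite_image_connectedComponentIn_Dset hG (ha₁.trans_lt hu₁) hu₂)
    (finite_image_connectedComponentIn_Dset hG hu₁ (ha₂.trans_lt hu₂))

theorem persBetti_lt_add_of_isClosed (hF : Continuous F) (ha₁ : a.1 ≤ u.1) (ha₂ : a.2 ≤ u.2)
    (hu₁ : u.1 < v.1) (hu₂ : u.2 < v.2)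
    (hclosed : IsClosed (F ⁻¹' Dset v ∩ {x | a.1 < (F x).1 ∧ a.2 < (F x).2}))
    (hconn : IsPreconnected (F ⁻¹' Dset v ∩ {x | a.1 < (F x).1 ∧ a.2 < (F x).2}))
    (hne : ∃ x, F x ∈ Dset u ∧ a.1 < (F x).1 ∧ a.2 < (F x).2) :
    persBetti F (a.1, u.2) v + persBetti F (u.1, a.2) v <
      persBetti F u v + persBetti F a v := by
  have huv : Dset u ⊆ Dset v := Dset_subset_Dset hu₁.le hu₂.le
  obtain ⟨x, hxu, hxa⟩ := hne
  have hA : IsClosed {x | (F x).1 ≤ a.1} := isClosed_le hF.fst continuous_const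
  have hB : IsClosed {x | (F x).2 ≤ a.2} := isClosed_le hF.snd continuous_const
  have hlt := ncard_image_connectedComponentIn_add_lt (S := F ⁻¹' Dset v) (K := F ⁻¹' Dset u)
    hA hB hclosed hconn inter_subset_left
    (fun y hy => by
      rcases le_or_gt (F y).1 a.1 with h₁ | h₁
      · exact Or.inr (Or.inl h₁)
      rcases le_or_gt (F y).2 a.2 with h₂ | h₂
      · exact Or.inr (Or.inr h₂)
      · exact Or.inl ⟨hy, h₁, h₂⟩)
    (disjoint_left.2 fun y hy hyab => hyab.elim hy.2.1.not_ge hy.2.2.not_ge)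
    (preimage_mono huv) (fun y hy => ⟨hy.2.1.trans ha₁, hy.2.2.trans ha₂⟩)
    ⟨x, hxu, huv hxu, hxa⟩ (finite_image_connectedComponentIn_Dset hF hu₁ hu₂)
  unfold persBetti
  rw [Dset_fst_snd_eq ha₁, Dset_snd_fst_eq ha₂, Dset_eq_inter ha₁ ha₂]
  exact hlt

end PersistentBetti

/-- The persistence modules `H₀` of the sublevel filtrations of two planar curves have equal ranks
on `Δ⁺`. -/
def SamePersistence (F G : Circ → ℝ × ℝ) : Prop :=
  ∀ u v : ℝ × ℝ, u.1 < v.1 → u.2 < v.2 → persBetti F u v = persBetti G u v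

/-- The reflection `(x, y) ↦ (-x, y)` of the plane. -/
def reflectFst (p : ℝ × ℝ) : ℝ × ℝ := (-p.1, p.2)

section Detection

variable {F G : Circ → ℝ × ℝ}

theorem SamePersistence.symm (h : SamePersistence F G) : SamePersistence G F :=
  fun u v hu₁ hu₂ => (h u v hu₁ hu₂).symm

theorem persBetti_swap_comp (F : Circ → ℝ × ℝ) (u v : ℝ × ℝ) :
    persBetti (Prod.swap ∘ F) u v = persBetti F u.swap v.swap := by
  have hswap (w : ℝ × ℝ) : Prod.swap ∘ F ⁻¹' Dset w = F ⁻¹' Dset w.swap :=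
    Set.ext fun _ => and_comm
  simp only [persBetti, hswap]

theorem SamePersistence.swap_comp (h : SamePersistence F G) :
    SamePersistence (Prod.swap ∘ F) (Prod.swap ∘ G) := fun u v hu₁ hu₂ => by
  rw [persBetti_swap_comp, persBetti_swap_comp]
  exact h u.swap v.swap hu₂ hu₁

theorem SamePersistence.exists_mem_Dset {a u v : ℝ × ℝ} (h : SamePersistence F G)
    (hF : Continuous F) (hG : Continuous G) (ha₁ : a.1 ≤ u.1) (ha₂ : a.2 ≤ u.2)
    (hu₁ : u.1 < v.1) (hu₂ : u.2 < v.2)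
    (hclosed : IsClosed (F ⁻¹' Dset v ∩ {x | a.1 < (F x).1 ∧ a.2 < (F x).2}))
    (hconn : IsPreconnected (F ⁻¹' Dset v ∩ {x | a.1 < (F x).1 ∧ a.2 < (F x).2}))
    (hne : ∃ x, F x ∈ Dset u ∧ a.1 < (F x).1 ∧ a.2 < (F x).2) :
    ∃ x, G x ∈ Dset u ∧ a.1 < (G x).1 ∧ a.2 < (G x).2 := by
  by_contra! hempty
  have hlt := persBetti_lt_add_of_isClosed hF ha₁ ha₂ hu₁ hu₂ hclosed hconn hne
  have hle := persBetti_add_le_of_forall hG ha₁ ha₂ hu₁ hu₂ fun x hx =>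
    or_iff_not_imp_left.2 fun hx₁ => hempty x hx (not_le.1 hx₁)
  rw [h _ v hu₁ hu₂, h a v (ha₁.trans_lt hu₁) (ha₂.trans_lt hu₂), h (a.1, u.2) v
    (ha₁.trans_lt hu₁) hu₂, h (u.1, a.2) v hu₁ (ha₂.trans_lt hu₂)] at hlt
  exact hlt.not_ge hle

theorem preimage_Dset_inter_eq_image_Icc {N : Set ℝ} {a : ℝ × ℝ} {b c : ℝ}
    (hmono : StrictMonoOn (fun t : ℝ => (F t).1) N)
    (hanti : StrictAntiOn (fun t : ℝ => (F t).2) N) (hbc : b ≤ c) (hN : Icc b c ⊆ N)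
    (hab : a.1 < (F b).1) (hac : a.2 < (F c).2)
    (harc : ∀ x, a.1 < (F x).1 → a.2 < (F x).2 → F x ∈ Dset ((F c).1, (F b).2) →
      x ∈ ((↑) : ℝ → Circ) '' N) :
    F ⁻¹' Dset ((F c).1, (F b).2) ∩ {x | a.1 < (F x).1 ∧ a.2 < (F x).2} =
      ((↑) : ℝ → Circ) '' Icc b c := by
  have hb : b ∈ N := hN (left_mem_Icc.2 hbc)
  have hc : c ∈ N := hN (right_mem_Icc.2 hbc)
  refine Subset.antisymm ?_ ?_
  · rintro x ⟨hx, hxa⟩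
    obtain ⟨t, ht, rfl⟩ := harc x hxa.1 hxa.2 hx
    exact ⟨t, ⟨(hanti.le_iff_ge ht hb).1 hx.2, (hmono.le_iff_le ht hc).1 hx.1⟩, rfl⟩
  · rintro _ ⟨t, ht, rfl⟩
    exact ⟨⟨(hmono.le_iff_le (hN ht) hc).2 ht.2, (hanti.le_iff_ge (hN ht) hb).2 ht.1⟩,
      hab.trans_le ((hmono.le_iff_le hb (hN ht)).2 ht.1),
      hac.trans_le ((hanti.le_iff_ge hc (hN ht)).2 ht.2)⟩

theorem SamePersistence.exists_mem_Dset_of_arc {N : Set ℝ} {a : ℝ × ℝ} {b t c : ℝ}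
    (h : SamePersistence F G) (hF : Continuous F) (hG : Continuous G)
    (hmono : StrictMonoOn (fun t : ℝ => (F t).1) N)
    (hanti : StrictAntiOn (fun t : ℝ => (F t).2) N) (hbt : b < t) (htc : t < c) (hN : Icc b c ⊆ N)
    (hab : a.1 < (F b).1) (hac : a.2 < (F c).2)
    (harc : ∀ x, a.1 < (F x).1 → a.2 < (F x).2 → F x ∈ Dset ((F c).1, (F b).2) →
      x ∈ ((↑) : ℝ → Circ) '' N) :
    ∃ x, G x ∈ Dset (F t) ∧ a.1 < (G x).1 ∧ a.2 < (G x).2 := by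
  have hb : b ∈ N := hN (left_mem_Icc.2 (hbt.trans htc).le)
  have hc : c ∈ N := hN (right_mem_Icc.2 (hbt.trans htc).le)
  have ht : t ∈ N := hN ⟨hbt.le, htc.le⟩
  have hat₁ : a.1 < (F t).1 := hab.trans (hmono hb ht hbt)
  have hat₂ : a.2 < (F t).2 := hac.trans (hanti ht hc htc)
  have hcoe : Continuous ((↑) : ℝ → Circ) := isQuotientMap_coe.continuous
  have heq := preimage_Dset_inter_eq_image_Icc hmono hanti (hbt.trans htc).le hN hab hac harc
  exact h.exists_mem_Dset (v := ((F c).1, (F b).2)) hF hG hat₁.le hat₂.le (hmono ht hc htc)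
    (hanti hb ht hbt) (heq ▸ (isCompact_Icc.image hcoe).isClosed)
    (heq ▸ isPreconnected_Icc.image _ hcoe.continuousOn) ⟨t, ⟨le_rfl, le_rfl⟩, hat₁, hat₂⟩

theorem SamePersistence.mem_range_of_strictMonoOn_strictAntiOn {t₀ : ℝ} {N : Set ℝ}
    (h : SamePersistence F G) (hF : Continuous F) (hG : Continuous G) (hN : N ∈ 𝓝 t₀)
    (hmono : StrictMonoOn (fun t : ℝ => (F t).1) N)
    (hanti : StrictAntiOn (fun t : ℝ => (F t).2) N)
    (hsimple : ∀ x, F x = F t₀ → x = t₀) : F t₀ ∈ range G := by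
  by_contra hrange
  have hcont : Continuous fun t : ℝ => F t := hF.comp isQuotientMap_coe.continuous
  have hfiber : ∀ᶠ q in 𝓝 (F t₀), ∀ x, F x = q → x ∈ ((↑) : ℝ → Circ) '' N :=
    hF.isClosedMap.eventually_nhds_fiber (F t₀) fun x hx => by
      obtain rfl : x = t₀ := hsimple x hx
      exact QuotientAddGroup.isOpenMap_coe.image_mem_nhds hN
  obtain ⟨ε, hε, hball⟩ := Metric.eventually_nhds_iff.1
    (hfiber.and ((isCompact_range hG).isClosed.isOpen_compl.mem_nhds hrange))
  have hdist {q : ℝ × ℝ} : dist q (F t₀) < ε ↔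
      ((F t₀).1 - ε < q.1 ∧ q.1 < (F t₀).1 + ε) ∧ (F t₀).2 - ε < q.2 ∧ q.2 < (F t₀).2 + ε := by
    simp only [Prod.dist_eq, Real.dist_eq, max_lt_iff, abs_sub_lt_iff, sub_lt_iff_lt_add,
      and_comm, add_comm]
  obtain ⟨r, hr, hrN⟩ := Metric.nhds_basis_closedBall.mem_iff.1
    (inter_mem hN (hcont.continuousAt (Metric.ball_mem_nhds (F t₀) hε)))
  rw [Real.closedBall_eq_Icc, subset_inter_iff] at hrN
  obtain ⟨⟨hFb₁, -⟩, -, hFb₂⟩ := hdist.1 (hrN.2 (left_mem_Icc.2 (by linarith)))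
  obtain ⟨⟨-, hFc₁⟩, hFc₂, -⟩ := hdist.1 (hrN.2 (right_mem_Icc.2 (by linarith)))
  obtain ⟨x, hxu, hx₁, hx₂⟩ := h.exists_mem_Dset_of_arc
    (a := ((F t₀).1 - ε, (F t₀).2 - ε)) hF hG hmono hanti (sub_lt_self t₀ hr)
    (lt_add_of_pos_right t₀ hr) hrN.1 hFb₁ hFc₂ fun x hx₁ hx₂ hx =>
      (hball (hdist.2 ⟨⟨hx₁, hx.1.trans_lt hFc₁⟩, hx₂, hx.2.trans_lt hFb₂⟩)).1 x rfl
  exact (hball (hdist.2 ⟨⟨hx₁, hxu.1.trans_lt (lt_add_of_pos_right _ hε)⟩,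
    hx₂, hxu.2.trans_lt (lt_add_of_pos_right _ hε)⟩)).2 (mem_range_self x)

end Detection

section Cross

variable {a b c : ℝ × ℝ}

theorem exists_eq_smul_of_cross_eq_zero (hb : b ≠ 0) (h : cross a b = 0) : ∃ k : ℝ, a = k • b := by
  have hab : a.1 * b.2 = a.2 * b.1 := sub_eq_zero.1 h
  rcases Prod.mk_eq_zero.not.1 hb |> not_and_or.1 with h₁ | h₂
  · exact ⟨a.1 / b.1, Prod.ext (div_mul_cancel₀ _ h₁).symm
      (by simp only [Prod.smul_snd, smul_eq_mul]; field_simp; linarith)⟩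
  · exact ⟨a.2 / b.2, Prod.ext (by simp only [Prod.smul_fst, smul_eq_mul]; field_simp; linarith)
      (div_mul_cancel₀ _ h₂).symm⟩

theorem cross_self_eq_zero (a : ℝ × ℝ) : cross a a = 0 := by
  unfold cross; ring

theorem cross_smul_left (k : ℝ) (a b : ℝ × ℝ) : cross (k • a) b = k * cross a b := by
  simp only [cross, Prod.smul_fst, Prod.smul_snd, smul_eq_mul]; ring

theorem cross_eq_zero_comm : cross a b = 0 ↔ cross b a = 0 := by
  simp only [cross, sub_eq_zero, mul_comm, eq_comm]

theorem cross_eq_zero_trans (hb : b ≠ 0) (hab : cross a b = 0) (hbc : cross b c = 0) :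
    cross a c = 0 := by
  obtain ⟨k, rfl⟩ := exists_eq_smul_of_cross_eq_zero hb hab
  rw [cross_smul_left, hbc, mul_zero]

theorem continuous_cross : Continuous fun p : (ℝ × ℝ) × (ℝ × ℝ) => cross p.1 p.2 := by
  unfold cross; fun_prop

/-- A vector is oblique when it is parallel to neither coordinate axis. -/
def Oblique (w : ℝ × ℝ) : Prop := w.1 ≠ 0 ∧ w.2 ≠ 0

theorem isOpen_setOfPred_oblique : IsOpen {w | Oblique w} :=
  (isOpen_ne_fun continuous_fst continuous_const).inter
    (isOpen_ne_fun continuous_snd continuous_const)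

theorem eventually_cross_eq_zero_of_not_oblique (ha : a ≠ 0) (hb : b ≠ 0) (hab : cross a b = 0) :
    ∀ᶠ p in 𝓝 (a, b), ¬ Oblique p.1 → ¬ Oblique p.2 → cross p.1 p.2 = 0 := by
  obtain ⟨k, rfl⟩ := exists_eq_smul_of_cross_eq_zero hb hab
  have hk : k ≠ 0 := (smul_ne_zero_iff.1 ha).1
  rcases Prod.mk_eq_zero.not.1 hb |> not_and_or.1 with hb₁ | hb₂
  · filter_upwards [continuous_fst.fst.continuousAt.eventually_ne (mul_ne_zero hk hb₁),
      continuous_snd.fst.continuousAt.eventually_ne hb₁] with p hp₁ hp₂ h₁ h₂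
    rw [cross, not_not.1 fun h => h₁ ⟨hp₁, h⟩, not_not.1 fun h => h₂ ⟨hp₂, h⟩, mul_zero, zero_mul,
      sub_zero]
  · filter_upwards [continuous_fst.snd.continuousAt.eventually_ne (mul_ne_zero hk hb₂),
      continuous_snd.snd.continuousAt.eventually_ne hb₂] with p hp₁ hp₂ h₁ h₂
    rw [cross, not_not.1 fun h => h₁ ⟨h, hp₁⟩, not_not.1 fun h => h₂ ⟨h, hp₂⟩, mul_zero, zero_mul,
      sub_zero]

end Cross

section Calculus

variable {E : Type*} [NormedAddCommGroup E] [NormedSpace ℝ E]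

theorem eventually_eq_of_hasStrictDerivAt {f : ℝ → E} {f' : E} {x : ℝ}
    (hf : HasStrictDerivAt f f' x) (hf' : f' ≠ 0) :
    ∀ᶠ p in 𝓝 (x, x), f p.1 = f p.2 → p.1 = p.2 := by
  filter_upwards [hf.hasStrictFDerivAt.isLittleO.bound (half_pos (norm_pos_iff.2 hf'))]
    with p hp heq
  simp only [heq, sub_self, zero_sub, norm_neg, ContinuousLinearMap.toSpanSingleton_apply,
    norm_smul] at hp
  have hle : ‖p.1 - p.2‖ ≤ 0 := by nlinarith [norm_pos_iff.2 hf']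
  exact sub_eq_zero.1 (norm_le_zero_iff.1 hle)

theorem cross_eq_zero_of_frequently_eq {f g : ℝ → ℝ × ℝ} {f' g' : ℝ × ℝ} {x y : ℝ}
    (hf : HasDerivAt f f' x) (hg : HasDerivAt g g' y)
    (h : ∃ᶠ p in 𝓝[≠] x ×ˢ 𝓝 y, f p.1 = g p.2) : f x = g y ∧ cross f' g' = 0 := by
  have hx : Tendsto Prod.fst (𝓝[≠] x ×ˢ 𝓝 y) (𝓝 x) := tendsto_fst.mono_right nhdsWithin_le_nhds
  have hfx : Tendsto (fun p : ℝ × ℝ => f p.1) (𝓝[≠] x ×ˢ 𝓝 y) (𝓝 (f x)) :=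
    hf.continuousAt.tendsto.comp hx
  have hgy : Tendsto (fun p : ℝ × ℝ => g p.2) (𝓝[≠] x ×ˢ 𝓝 y) (𝓝 (g y)) :=
    hg.continuousAt.tendsto.comp tendsto_snd
  have hxy : f x = g y :=
    isClosed_diagonal.mem_of_frequently_of_tendsto h (hfx.prodMk_nhds hgy)
  have hslope : Tendsto (fun p : ℝ × ℝ => slope f x p.1) (𝓝[≠] x ×ˢ 𝓝 y) (𝓝 f') :=
    (hasDerivAt_iff_tendsto_slope.1 hf).comp tendsto_fst
  -- `p.2 = y` is possible here, hence `dslope` on the side of `g`.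
  have hdslope : Tendsto (fun p : ℝ × ℝ => dslope g y p.2) (𝓝[≠] x ×ˢ 𝓝 y) (𝓝 g') := by
    rw [← hg.deriv, ← dslope_same]
    exact (continuousAt_dslope_same.2 hg.differentiableAt).tendsto.comp tendsto_snd
  refine ⟨hxy, (isClosed_singleton.preimage continuous_cross).mem_of_frequently_of_tendsto ?_
    (hslope.prodMk_nhds hdslope)⟩
  have hne : ∀ᶠ p in 𝓝[≠] x ×ˢ 𝓝 y, p.1 ≠ x := tendsto_fst self_mem_nhdsWithin
  refine (h.and_eventually hne).mono fun p ⟨hp, hpx⟩ => ?_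
  have hparallel : (p.1 - x) • slope f x p.1 = (p.2 - y) • dslope g y p.2 := by
    rw [sub_smul_slope, sub_smul_dslope, hp, hxy, vsub_eq_sub]
  refine (mul_eq_zero.1 ?_).resolve_left (sub_ne_zero.2 hpx)
  rw [← cross_smul_left, hparallel, cross_smul_left, cross_self_eq_zero, mul_zero]

theorem exists_contDiffAt_rightInverse {k : ℝ → ℝ} {k' x : ℝ} (hk : ContDiffAt ℝ 1 k x)
    (hk' : HasDerivAt k k' x) (hne : k' ≠ 0) :
    ∃ ψ : ℝ → ℝ, ContDiffAt ℝ 1 ψ (k x) ∧ ψ (k x) = x ∧ ∀ᶠ y in 𝓝 (k x), k (ψ y) = y :=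
  have hequiv := hk'.hasFDerivAt_equiv hne
  ⟨hk.localInverse hequiv one_ne_zero, hk.to_localInverse hequiv one_ne_zero,
    hk.localInverse_apply_image hequiv one_ne_zero,
    (hk.hasStrictFDerivAt' hequiv one_ne_zero).eventually_right_inverse⟩

theorem eventually_eq_of_eventually_hasDerivAt_zero {q : ℝ → E} {x : ℝ}
    (h : ∀ᶠ t in 𝓝 x, HasDerivAt q 0 t) : ∀ᶠ t in 𝓝 x, q t = q x := by
  obtain ⟨ε, hε, hball⟩ := Metric.eventually_nhds_iff_ball.1 h
  filter_upwards [Metric.ball_mem_nhds x hε] with t ht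
  exact Metric.isOpen_ball.is_const_of_deriv_eq_zero (convex_ball x ε).isPreconnected
    (fun s hs => (hball s hs).differentiableAt.differentiableWithinAt)
    (fun s hs => (hball s hs).deriv) ht (Metric.mem_ball_self hε)

theorem eventually_comp_eq_of_cross_eq_zero {f g f' g' : ℝ → ℝ × ℝ} {φ : ℝ → ℝ} {x : ℝ}
    (ℓ : ℝ × ℝ →L[ℝ] ℝ) (hf : ∀ t, HasDerivAt f (f' t) t) (hg : ∀ t, HasDerivAt g (g' t) t)
    (hφ : ∀ᶠ t in 𝓝 x, DifferentiableAt ℝ φ t) (hx : g (φ x) = f x)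
    (hℓ : ∀ᶠ t in 𝓝 x, ℓ (g (φ t)) = ℓ (f t)) (hℓg' : ∀ᶠ t in 𝓝 x, ℓ (g' (φ t)) ≠ 0)
    (hcross : ∀ᶠ t in 𝓝 x, cross (f' t) (g' (φ t)) = 0) : ∀ᶠ t in 𝓝 x, g (φ t) = f t := by
  have hconst : ∀ᶠ t in 𝓝 x, HasDerivAt (fun s => g (φ s) - f s) 0 t := by
    filter_upwards [hφ, hℓ.eventually_nhds, hℓg', hcross] with t hφt hℓt hne hct
    have hderiv : HasDerivAt (fun s => g (φ s) - f s) (deriv φ t • g' (φ t) - f' t) t :=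
      ((hg (φ t)).scomp t hφt.hasDerivAt).sub (hf t)
    obtain ⟨k, hk⟩ := exists_eq_smul_of_cross_eq_zero (fun h0 => hne (by rw [h0, map_zero])) hct
    rw [hk, ← sub_smul] at hderiv
    have hzero : ℓ ((deriv φ t - k) • g' (φ t)) = 0 :=
      (ℓ.hasFDerivAt.comp_hasDerivAt t hderiv).unique
        ((hasDerivAt_const t (0 : ℝ)).congr_of_eventuallyEq (by
          filter_upwards [hℓt] with s hs
          rw [Function.comp_apply, map_sub, hs, sub_self]))
    rw [map_smul, smul_eq_mul, mul_eq_zero, or_iff_left hne] at hzero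
    rwa [hzero, zero_smul] at hderiv
  filter_upwards [eventually_eq_of_eventually_hasDerivAt_zero hconst] with t ht
  rwa [hx, sub_self, sub_eq_zero] at ht

theorem exists_mem_nhds_strictMonoOn {k : ℝ → ℝ} {k' x : ℝ} (hk : ContDiff ℝ 1 k)
    (hk' : HasDerivAt k k' x) (hpos : 0 < k') : ∃ N ∈ 𝓝 x, StrictMonoOn k N := by
  obtain ⟨ε, hε, hball⟩ := Metric.mem_nhds_iff.1
    ((hk.continuous_deriv le_rfl).continuousAt.eventually_const_lt (hk'.deriv ▸ hpos))
  exact ⟨Metric.ball x ε, Metric.ball_mem_nhds x hε, strictMonoOn_of_deriv_pos (convex_ball x ε)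
    hk.continuous.continuousOn fun t ht => hball (interior_subset ht)⟩

end Calculus

section Lift

variable {p : ℝ}

theorem exists_continuous_lift {f : ℝ → AddCircle p} (hf : Continuous f) :
    ∃ h : ℝ → ℝ, Continuous h ∧ ∀ t, f t = h t := by
  obtain ⟨a, ha⟩ := QuotientAddGroup.mk_surjective (f 0)
  obtain ⟨h, ⟨-, hlift⟩, -⟩ := (AddCircle.isCoveringMap_coe p).existsUnique_continuousMap_lifts
    ⟨f, hf⟩ 0 a ha
  exact ⟨h, h.continuous, fun t => (congrFun hlift t).symm⟩

theorem exists_int_forall_eq_add_mul {a b : ℝ → ℝ} (ha : Continuous a) (hb : Continuous b)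
    (hab : ∀ t, (a t : AddCircle p) = b t) : ∃ n : ℤ, ∀ t, a t = b t + n * p := by
  obtain ⟨n, hn⟩ := QuotientAddGroup.eq_iff_sub_mem.1 (hab 0)
  have hn : n * p = a 0 - b 0 := (zsmul_eq_mul p n).symm.trans hn
  refine ⟨n, congrFun ((AddCircle.isCoveringMap_coe p).eq_of_comp_eq ha (by fun_prop)
    (funext fun t => ?_) 0 (by rw [hn, add_sub_cancel]))⟩
  rw [Function.comp_apply, Function.comp_apply, hab, AddCircle.coe_add, ← zsmul_eq_mul,
    AddCircle.coe_zsmul, AddCircle.coe_period, smul_zero, add_zero]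

theorem exists_lift_add_period {f : AddCircle p → AddCircle p} (hf : Continuous f) :
    ∃ (h : ℝ → ℝ) (n : ℤ), Continuous h ∧ (∀ t : ℝ, f t = h t) ∧
      ∀ t, h (t + p) = h t + n * p := by
  obtain ⟨h, hh, hfh⟩ := exists_continuous_lift (hf.comp (AddCircle.continuous_mk' p))
  obtain ⟨n, hn⟩ := exists_int_forall_eq_add_mul (p := p) (hh.comp (continuous_add_const p)) hh
    fun t => by
      rw [Function.comp_apply, ← hfh, ← hfh]
      exact congrArg f (AddCircle.coe_add_period p t)
  exact ⟨h, n, hh, hfh, hn⟩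

theorem add_int_mul_of_forall_add {k : ℝ → ℝ} {m : ℤ} (hk : ∀ t, k (t + p) = k t + m * p) (n : ℤ)
    (t : ℝ) : k (t + n * p) = k t + m * (n * p) := by
  have hper : Function.Periodic (fun t => k t - m * t) p := fun t => by
    simp only [hk]; ring
  linarith [hper.int_mul n t]

theorem exists_lift_of_homeomorph (hp : p ≠ 0) (e : AddCircle p ≃ₜ AddCircle p) :
    ∃ h : ℝ → ℝ, Continuous h ∧ (∀ t : ℝ, e t = h t) ∧
      ((∀ t, h (t + p) = h t + p) ∨ ∀ t, h (t + p) = h t - p) := by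
  obtain ⟨h, n, hh, heh, hn⟩ := exists_lift_add_period e.continuous
  obtain ⟨k, m, hk, hek, hm⟩ := exists_lift_add_period e.symm.continuous
  obtain ⟨c, hc⟩ := exists_int_forall_eq_add_mul (p := p) (hk.comp hh) continuous_id fun t => by
    rw [Function.comp_apply, ← hek, ← heh, e.symm_apply_apply, id]
  have hmn : m * n = 1 := by
    have hshift := hc (0 + p)
    have hzero := hc 0
    simp only [Function.comp_apply, hn, add_int_mul_of_forall_add hm, id] at hshift hzero
    have hmul : (m * n : ℝ) * p = 1 * p := by linarith
    exact_mod_cast mul_right_cancel₀ hp hmul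
  refine ⟨h, hh, heh, (Int.eq_one_or_neg_one_of_mul_eq_one' hmn).imp ?_ ?_⟩
  · rintro ⟨-, rfl⟩ t
    rw [hn, Int.cast_one, one_mul]
  · rintro ⟨-, rfl⟩ t
    rw [hn, Int.cast_neg, Int.cast_one, neg_one_mul, sub_eq_add_neg]

end Lift

section Velocity

variable {F G : Circ → ℝ × ℝ}

/-- The derivative of a planar curve, as a function on the circle; the group structure of the circle
supplies the local parameter at each point. -/
def velocity (F : Circ → ℝ × ℝ) (x : Circ) : ℝ × ℝ := deriv (fun s : ℝ => F (x + s)) 0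

theorem velocity_coe (F : Circ → ℝ × ℝ) (t : ℝ) : velocity F t = deriv (liftOf F) t := by
  have hshift : (fun s : ℝ => F (t + s)) = fun s => liftOf F (t + s) :=
    funext fun s => congrArg F (AddCircle.coe_add (2 * π) t s).symm
  rw [velocity, hshift, deriv_comp_const_add, add_zero]

theorem IsC1.continuous (hF : IsC1 F) : Continuous F :=
  isQuotientMap_coe.continuous_iff.2 (ContDiff.continuous hF)

theorem IsC1.continuous_velocity (hF : IsC1 F) : Continuous (velocity F) :=
  isQuotientMap_coe.continuous_iff.2 <|
    (ContDiff.continuous_deriv hF le_rfl).congr fun t => (velocity_coe F t).symm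

theorem IsC1.hasStrictDerivAt (hF : IsC1 F) (t : ℝ) :
    HasStrictDerivAt (liftOf F) (velocity F t) t := by
  rw [velocity_coe]
  exact (ContDiff.contDiffAt hF).hasStrictDerivAt one_ne_zero

theorem IsC1.hasDerivAt (hF : IsC1 F) (t : ℝ) : HasDerivAt (liftOf F) (velocity F t) t :=
  (hF.hasStrictDerivAt t).hasDerivAt

theorem IsC1.hasDerivAt_clm {E : Type*} [NormedAddCommGroup E] [NormedSpace ℝ E] (hF : IsC1 F)
    (ℓ : ℝ × ℝ →L[ℝ] E) (t : ℝ) :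
    HasDerivAt (fun s => ℓ (liftOf F s)) (ℓ (velocity F t)) t :=
  ℓ.hasFDerivAt.comp_hasDerivAt t (hF.hasDerivAt t)

theorem IsC1.clm_comp (hF : IsC1 F) (L : ℝ × ℝ →L[ℝ] ℝ × ℝ) : IsC1 (L ∘ F) :=
  L.contDiff.comp hF

theorem IsC1.velocity_clm_comp (hF : IsC1 F) (L : ℝ × ℝ →L[ℝ] ℝ × ℝ) (t : ℝ) :
    velocity (L ∘ F) t = L (velocity F t) := by
  rw [velocity_coe]
  exact (hF.hasDerivAt_clm L t).deriv

theorem SamePersistence.mem_range_of_fst_pos_of_snd_neg {t : ℝ} (h : SamePersistence F G)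
    (hF : IsC1 F) (hG : Continuous G) (hpos : 0 < (velocity F t).1) (hneg : (velocity F t).2 < 0)
    (hsimple : ∀ x, F x = F t → x = t) : F t ∈ range G := by
  obtain ⟨N₁, hN₁, hmono⟩ := exists_mem_nhds_strictMonoOn (k := fun s => (liftOf F s).1)
    (ContDiff.fst hF) (hF.hasDerivAt_clm (.fst ℝ ℝ ℝ) t) hpos
  obtain ⟨N₂, hN₂, hanti⟩ := exists_mem_nhds_strictMonoOn (k := fun s => -(liftOf F s).2)
    (ContDiff.snd hF).neg (hF.hasDerivAt_clm (.snd ℝ ℝ ℝ) t).neg (neg_pos.2 hneg)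
  refine h.mem_range_of_strictMonoOn_strictAntiOn hF.continuous hG (inter_mem hN₁ hN₂)
    (hmono.mono inter_subset_left) (StrictAntiOn.mono ?_ inter_subset_right) hsimple
  exact fun s hs s' hs' hlt => neg_lt_neg_iff.1 (hanti hs hs' hlt)

theorem SamePersistence.mem_range_of_mul_neg {t : ℝ} (h : SamePersistence F G)
    (hF : IsC1 F) (hG : Continuous G) (hmul : (velocity F t).1 * (velocity F t).2 < 0)
    (hsimple : ∀ x, F x = F t → x = t) : F t ∈ range G := by
  rcases mul_neg_iff.1 hmul with ⟨hpos, hneg⟩ | ⟨hneg, hpos⟩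
  · exact h.mem_range_of_fst_pos_of_snd_neg hF hG hpos hneg hsimple
  · let L := (ContinuousLinearEquiv.prodComm ℝ ℝ ℝ : ℝ × ℝ →L[ℝ] ℝ × ℝ)
    have hvel : velocity (Prod.swap ∘ F) t = (velocity F t).swap := hF.velocity_clm_comp L t
    obtain ⟨y, hy⟩ := h.swap_comp.mem_range_of_fst_pos_of_snd_neg (hF.clm_comp L)
      (continuous_swap.comp hG) (by rwa [hvel]) (by rwa [hvel])
      fun x hx => hsimple x (Prod.swap_injective hx)
    exact ⟨y, Prod.swap_injective hy⟩

theorem SamePersistence.mem_range_of_oblique {t : ℝ} (h : SamePersistence F G)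
    (hrefl : SamePersistence (reflectFst ∘ F) (reflectFst ∘ G)) (hF : IsC1 F) (hG : Continuous G)
    (hoblique : Oblique (velocity F t)) (hsimple : ∀ x, F x = F t → x = t) : F t ∈ range G := by
  rcases (mul_ne_zero hoblique.1 hoblique.2).lt_or_gt with hneg | hpos
  · exact h.mem_range_of_mul_neg hF hG hneg hsimple
  · have hinj : Function.Injective reflectFst := fun p q hpq =>
      Prod.ext (neg_injective (Prod.ext_iff.1 hpq).1) (Prod.ext_iff.1 hpq).2
    let L : ℝ × ℝ →L[ℝ] ℝ × ℝ :=
      (-ContinuousLinearMap.fst ℝ ℝ ℝ).prod (ContinuousLinearMap.snd ℝ ℝ ℝ)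
    have hvel : velocity (reflectFst ∘ F) t = reflectFst (velocity F t) := hF.velocity_clm_comp L t
    obtain ⟨y, hy⟩ := hrefl.mem_range_of_mul_neg (hF.clm_comp L) (L.continuous.comp hG)
      (by rw [hvel, reflectFst, neg_mul]; exact neg_neg_of_pos hpos)
      fun x hx => hsimple x (hinj hx)
    exact ⟨y, hinj hy⟩

end Velocity

section Contact

variable {F G : Circ → ℝ × ℝ}

/-- Two planar curves are in contact at given parameters when they pass there through the same
point in parallel directions. -/
def Contact (F G : Circ → ℝ × ℝ) (x y : Circ) : Prop :=
  F x = G y ∧ cross (velocity F x) (velocity G y) = 0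

theorem Contact.symm {x y : Circ} (h : Contact F G x y) : Contact G F y x :=
  ⟨h.1.symm, cross_eq_zero_comm.1 h.2⟩

theorem isClosed_setOfPred_contact (hF : IsC1 F) (hG : IsC1 G) :
    IsClosed {p : Circ × Circ | Contact F G p.1 p.2} :=
  (isClosed_eq (hF.continuous.comp continuous_fst) (hG.continuous.comp continuous_snd)).inter
    (isClosed_eq (continuous_cross.comp ((hF.continuous_velocity.comp continuous_fst).prodMk
      (hG.continuous_velocity.comp continuous_snd))) continuous_const)

/-- An immersed `C¹` closed curve without self-tangencies; any two branches through a multiple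
point cross transversally. -/
structure CleanImmersion (F : Circ → ℝ × ℝ) : Prop where
  isC1 : IsC1 F
  velocity_ne_zero : ∀ x, velocity F x ≠ 0
  eq_of_contact : ∀ x y, Contact F F x y → x = y

theorem Generic.cleanImmersion (hF : Generic F) : CleanImmersion F := by
  obtain ⟨hC1, himm, -, -, hclean⟩ := hF
  have hvel (x : Circ) : velocity F x ≠ 0 := by
    obtain ⟨t, rfl⟩ := QuotientAddGroup.mk_surjective x
    exact velocity_coe F t ▸ himm t
  refine ⟨hC1, hvel, fun x y hxy => ?_⟩
  obtain ⟨s, rfl⟩ := QuotientAddGroup.mk_surjective x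
  obtain ⟨t, rfl⟩ := QuotientAddGroup.mk_surjective y
  obtain ⟨k, hk⟩ := exists_eq_smul_of_cross_eq_zero (hvel t) hxy.2
  have hk₀ : k ≠ 0 := left_ne_zero_of_smul (hk ▸ hvel s)
  refine hclean s t hxy.1 ?_
  rw [tangentAt, tangentAt, ← velocity_coe, ← velocity_coe]
  exact (congrArg (fun w => Submodule.span ℝ {w}) hk).trans
    (Submodule.span_singleton_smul_eq hk₀.isUnit _)

theorem CleanImmersion.contact_unique {x y y' : Circ} (hG : CleanImmersion G)
    (hx : velocity F x ≠ 0) (h : Contact F G x y) (h' : Contact F G x y') : y = y' :=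
  hG.eq_of_contact y y'
    ⟨h.1.symm.trans h'.1, cross_eq_zero_trans hx (cross_eq_zero_comm.1 h.2) h'.2⟩

theorem contact_of_frequently_eq {t : ℝ} {y : Circ} (hF : IsC1 F) (hG : IsC1 G)
    (h : ∃ᶠ p in 𝓝[≠] t ×ˢ 𝓝 y, F (p.1 : ℝ) = G p.2) : Contact F G t y := by
  obtain ⟨s, rfl⟩ := QuotientAddGroup.mk_surjective y
  exact cross_eq_zero_of_frequently_eq (hF.hasDerivAt t) (hG.hasDerivAt s)
    (frequently_prod_nhds_coe.1 h)

theorem CleanImmersion.eventually_simple (hF : CleanImmersion F) (t : ℝ) :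
    ∀ᶠ t' : ℝ in 𝓝[≠] t, ∀ x : Circ, F x = F t' → x = t' := by
  by_contra hfreq
  simp only [not_eventually, not_forall, exists_prop] at hfreq
  obtain ⟨y, hy⟩ := exists_frequently_prod_nhds hfreq
  obtain rfl : ↑t = y := hF.eq_of_contact t y
    (contact_of_frequently_eq hF.isC1 hF.isC1 (hy.mono fun p hp => hp.1.symm))
  have hle : 𝓝[≠] t ×ˢ 𝓝 t ≤ 𝓝 (t, t) := by
    rw [nhds_prod_eq]
    exact prod_mono_left _ nhdsWithin_le_nhds
  obtain ⟨p, ⟨heq, hne⟩, hinj⟩ := ((frequently_prod_nhds_coe.1 hy).and_eventually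
    (hle (eventually_eq_of_hasStrictDerivAt (hF.isC1.hasStrictDerivAt t)
      (hF.velocity_ne_zero t)))).exists
  exact hne (congrArg _ (hinj heq.symm).symm)

/-- `F` touches `G` wherever its velocity is oblique. -/
def ObliqueContact (F G : Circ → ℝ × ℝ) : Prop :=
  ∀ x, Oblique (velocity F x) → ∃ y, Contact F G x y

theorem SamePersistence.obliqueContact (h : SamePersistence F G)
    (hrefl : SamePersistence (reflectFst ∘ F) (reflectFst ∘ G)) (hF : CleanImmersion F)
    (hG : IsC1 G) : ObliqueContact F G := by
  intro x hx
  obtain ⟨t, rfl⟩ := QuotientAddGroup.mk_surjective x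
  have hoblique : ∀ᶠ t' : ℝ in 𝓝[≠] t, Oblique (velocity F t') :=
    nhdsWithin_le_nhds ((isOpen_setOfPred_oblique.preimage (hF.isC1.continuous_velocity.comp
      isQuotientMap_coe.continuous)).mem_nhds hx)
  have hrange : ∀ᶠ t' : ℝ in 𝓝[≠] t, ∃ y, F t' = G y := by
    filter_upwards [hoblique, hF.eventually_simple t] with t' ht' hsimple
    obtain ⟨y, hy⟩ := h.mem_range_of_oblique hrefl hF.isC1 hG.continuous ht' hsimple
    exact ⟨y, hy.symm⟩
  obtain ⟨y, hy⟩ := exists_frequently_prod_nhds hrange.frequently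
  exact ⟨y, contact_of_frequently_eq hF.isC1 hG hy⟩

theorem CleanImmersion.eventually_contact {t s : ℝ} (hF : CleanImmersion F)
    (hG : CleanImmersion G) (h : Contact F G t s) (ℓ : ℝ × ℝ →L[ℝ] ℝ)
    (hℓ : ℓ (velocity G s) ≠ 0) :
    ∀ᶠ p : ℝ × ℝ in 𝓝 (t, s), ℓ (F p.1) = ℓ (G p.2) → (∃ y, Contact F G p.1 y) →
      Contact F G p.1 p.2 := by
  -- Otherwise contacts with parameters tending to `(t, y)` exist; uniqueness gives `y = s`, and
  -- there `ℓ ∘ G` is injective.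
  by_contra hfreq
  have hfreq' : ∃ᶠ p : ℝ × ℝ in 𝓝 (t, s), ∃ y : Circ, ℓ (F p.1) = ℓ (G p.2) ∧
      Contact F G p.1 y ∧ ¬ Contact F G p.1 p.2 :=
    (not_eventually.1 hfreq).mono fun p hp => by
      push Not at hp
      obtain ⟨hp₁, ⟨y, hy⟩, hp₂⟩ := hp
      exact ⟨y, hp₁, hy, hp₂⟩
  obtain ⟨y, hy⟩ := exists_frequently_prod_nhds hfreq'
  have htendsto : Tendsto (fun q : (ℝ × ℝ) × Circ => ((q.1.1 : Circ), q.2)) (𝓝 (t, s) ×ˢ 𝓝 y)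
      (𝓝 ((t : Circ), y)) := by
    rw [← nhds_prod_eq]
    exact ((isQuotientMap_coe.continuous.comp continuous_fst.fst).prodMk continuous_snd).tendsto _
  have hty : Contact F G t y :=
    (isClosed_setOfPred_contact hF.isC1 hG.isC1).mem_of_frequently_of_tendsto
      (hy.mono fun q hq => hq.2.1) htendsto
  obtain rfl : ↑s = y := hG.contact_unique (hF.velocity_ne_zero t) h hty
  have hsnd : Tendsto (fun q : (ℝ × ℝ) × ℝ => (q.1.2, q.2)) (𝓝 (t, s) ×ˢ 𝓝 s) (𝓝 (s, s)) := by
    rw [← nhds_prod_eq]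
    exact (continuous_fst.snd.prodMk continuous_snd).tendsto ((t, s), s)
  have hinj := eventually_eq_of_hasStrictDerivAt
    (ℓ.hasStrictFDerivAt.comp_hasStrictDerivAt s (hG.isC1.hasStrictDerivAt s)) hℓ
  obtain ⟨q, ⟨hq, hqy, hqs⟩, hqinj⟩ := ((frequently_prod_nhds_coe.1 hy).and_eventually
    (hsnd.eventually hinj)).exists
  have hqeq : q.1.2 = q.2 := hqinj (hq.symm.trans (congrArg ℓ hqy.1))
  exact hqs (hqeq ▸ hqy)

theorem IsC1.exists_clm_velocity_eq_zero (hF : IsC1 F) (ℓ : ℝ × ℝ →L[ℝ] ℝ) :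
    ∃ x, ℓ (velocity F x) = 0 := by
  obtain ⟨x, -, hx⟩ := isCompact_univ.exists_isMaxOn univ_nonempty
    (ℓ.continuous.comp hF.continuous).continuousOn
  obtain ⟨t, rfl⟩ := QuotientAddGroup.mk_surjective x
  have hmax : IsLocalMax (fun s => ℓ (liftOf F s)) t :=
    Eventually.of_forall fun s => hx (mem_univ (s : Circ))
  exact ⟨t, hmax.hasDerivAt_eq_zero (hF.hasDerivAt_clm ℓ t)⟩

theorem CleanImmersion.exists_oblique (hF : CleanImmersion F) : ∃ x, Oblique (velocity F x) := by
  by_contra! hnone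
  obtain ⟨x₁, hx₁⟩ := hF.isC1.exists_clm_velocity_eq_zero (.fst ℝ ℝ ℝ)
  obtain ⟨x₂, hx₂⟩ := hF.isC1.exists_clm_velocity_eq_zero (.snd ℝ ℝ ℝ)
  have hcont := hF.isC1.continuous_velocity
  obtain ⟨x, -, hx₁, hx₂⟩ := isPreconnected_closed_iff.1 (isPreconnected_univ (α := Circ))
    {x | (velocity F x).1 = 0} {x | (velocity F x).2 = 0}
    (isClosed_eq hcont.fst continuous_const) (isClosed_eq hcont.snd continuous_const)
    (fun x _ => or_iff_not_imp_left.2 fun h₁ => not_not.1 fun h₂ => hnone x ⟨h₁, h₂⟩)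
    ⟨x₁, mem_univ _, hx₁⟩ ⟨x₂, mem_univ _, hx₂⟩
  exact hF.velocity_ne_zero x (Prod.ext hx₁ hx₂)

end Contact

section Matching

variable {F G : Circ → ℝ × ℝ}

theorem CleanImmersion.eventually_cross_eq_zero {t s : ℝ} (hF : CleanImmersion F)
    (hG : CleanImmersion G) (hFG : ObliqueContact F G) (hGF : ObliqueContact G F)
    (h : Contact F G t s) (ℓ : ℝ × ℝ →L[ℝ] ℝ) (hℓ : ℓ (velocity G s) ≠ 0) :
    ∀ᶠ p : ℝ × ℝ in 𝓝 (t, s), ℓ (F p.1) = ℓ (G p.2) →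
      cross (velocity F p.1) (velocity G p.2) = 0 := by
  obtain ⟨k, hk⟩ := exists_eq_smul_of_cross_eq_zero (hG.velocity_ne_zero s) h.2
  have hk₀ : k ≠ 0 := left_ne_zero_of_smul (hk ▸ hF.velocity_ne_zero t)
  have hℓF : ℓ (velocity F t) ≠ 0 := by
    rw [hk, map_smul]
    exact smul_ne_zero hk₀ hℓ
  have hvel : Tendsto (fun p : ℝ × ℝ => (velocity F p.1, velocity G p.2)) (𝓝 (t, s))
      (𝓝 (velocity F t, velocity G s)) :=
    ((hF.isC1.continuous_velocity.comp isQuotientMap_coe.continuous).prodMap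
      (hG.isC1.continuous_velocity.comp isQuotientMap_coe.continuous)).tendsto (t, s)
  filter_upwards [hF.eventually_contact hG h ℓ hℓ,
    (continuous_swap.tendsto (t, s)).eventually (hG.eventually_contact hF h.symm ℓ hℓF),
    hvel.eventually (eventually_cross_eq_zero_of_not_oblique (hF.velocity_ne_zero t)
      (hG.velocity_ne_zero s) h.2)] with p hpF hpG hnot hp
  by_cases hobF : Oblique (velocity F p.1)
  · exact (hpF hp (hFG _ hobF)).2
  by_cases hobG : Oblique (velocity G p.2)
  · exact (hpG hp.symm (hGF _ hobG)).symm.2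
  · exact hnot hobF hobG

theorem CleanImmersion.exists_contDiffAt_contact {t s : ℝ} (hF : CleanImmersion F)
    (hG : CleanImmersion G) (hFG : ObliqueContact F G) (hGF : ObliqueContact G F)
    (h : Contact F G t s) :
    ∃ φ : ℝ → ℝ, ContDiffAt ℝ 1 φ t ∧ φ t = s ∧ ∀ᶠ t' : ℝ in 𝓝 t, Contact F G t' (φ t') := by
  obtain ⟨ℓ, hℓ⟩ := SeparatingDual.exists_ne_zero (R := ℝ) (hG.velocity_ne_zero s)
  obtain ⟨ψ, hψ, hψs, hright⟩ := exists_contDiffAt_rightInverse (x := s)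
    (ContDiff.contDiffAt (ℓ.contDiff.comp hG.isC1)) (hG.isC1.hasDerivAt_clm ℓ s) hℓ
  have hts : ℓ (liftOf F t) = ℓ (liftOf G s) := congrArg ℓ h.1
  rw [Function.comp_apply, ← hts] at hψ hψs hright
  set φ : ℝ → ℝ := fun t' => ψ (ℓ (liftOf F t'))
  have hφ : ContDiffAt ℝ 1 φ t :=
    ContDiffAt.comp t hψ (ContDiff.contDiffAt (ℓ.contDiff.comp hF.isC1))
  have hφs : φ t = s := hψs
  have hgraph : Tendsto (fun t' => (t', φ t')) (𝓝 t) (𝓝 (t, s)) :=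
    hφs ▸ continuousAt_id.prodMk hφ.continuousAt
  have hℓeq : ∀ᶠ t' in 𝓝 t, ℓ (G (φ t')) = ℓ (F t') :=
    (hF.isC1.hasDerivAt_clm ℓ t).continuousAt.eventually hright
  have hcross : ∀ᶠ t' : ℝ in 𝓝 t, cross (velocity F t') (velocity G (φ t')) = 0 := by
    filter_upwards [hgraph.eventually (hF.eventually_cross_eq_zero hG hFG hGF h ℓ hℓ), hℓeq]
      with t' hcross heq using hcross heq.symm
  have hℓvel : ∀ᶠ t' in 𝓝 t, ℓ (velocity G (φ t')) ≠ 0 := by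
    have hcont : Continuous fun s' : ℝ => ℓ (velocity G s') :=
      ℓ.continuous.comp (hG.isC1.continuous_velocity.comp isQuotientMap_coe.continuous)
    exact hφ.continuousAt.eventually (hcont.continuousAt.eventually_ne (by rwa [hφs]))
  have heq := eventually_comp_eq_of_cross_eq_zero ℓ hF.isC1.hasDerivAt hG.isC1.hasDerivAt
    ((hφ.eventually (by decide)).mono fun t' ht' => ht'.differentiableAt one_ne_zero)
    (hφs ▸ h.1.symm) hℓeq hℓvel hcross
  exact ⟨φ, hφ, hφs, (heq.and hcross).mono fun t' ht' => ⟨ht'.1.symm, ht'.2⟩⟩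

theorem CleanImmersion.exists_contact (hF : CleanImmersion F) (hG : CleanImmersion G)
    (hFG : ObliqueContact F G) (hGF : ObliqueContact G F) (x : Circ) : ∃ y, Contact F G x y := by
  have hclosed : IsClosed {x | ∃ y, Contact F G x y} := by
    convert isClosedMap_fst_of_compactSpace _ (isClosed_setOfPred_contact hF.isC1 hG.isC1)
    ext x
    simp
  have hopen : IsOpen {x | ∃ y, Contact F G x y} := by
    refine isOpen_iff_mem_nhds.2 fun x ⟨y, hxy⟩ => ?_
    obtain ⟨t, rfl⟩ := QuotientAddGroup.mk_surjective x
    obtain ⟨s, rfl⟩ := QuotientAddGroup.mk_surjective y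
    obtain ⟨φ, -, -, hφ⟩ := hF.exists_contDiffAt_contact hG hFG hGF hxy
    rw [QuotientAddGroup.nhds_eq]
    exact hφ.mono fun t' ht' => ⟨_, ht'⟩
  obtain ⟨x₀, hx₀⟩ := hF.exists_oblique
  exact eq_univ_iff_forall.1 (IsClopen.eq_univ ⟨hclosed, hopen⟩ ⟨x₀, hFG x₀ hx₀⟩) x

theorem CleanImmersion.exists_homeomorph_contact (hF : CleanImmersion F) (hG : CleanImmersion G)
    (hFG : ObliqueContact F G) (hGF : ObliqueContact G F) :
    ∃ e : Circ ≃ₜ Circ, ∀ x, Contact F G x (e x) := by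
  choose H hH using hF.exists_contact hG hFG hGF
  choose K hK using hG.exists_contact hF hGF hFG
  have hHK (x y : Circ) : H x = y ↔ Contact F G x y :=
    ⟨fun h => h ▸ hH x, fun h => hG.contact_unique (hF.velocity_ne_zero x) (hH x) h⟩
  have hKH (y x : Circ) : K y = x ↔ Contact G F y x :=
    ⟨fun h => h ▸ hK y, fun h => hF.contact_unique (hG.velocity_ne_zero y) (hK y) h⟩
  refine ⟨⟨⟨H, K, fun x => (hKH _ _).2 (hH x).symm, fun y => (hHK _ _).2 (hK y).symm⟩,
    continuous_of_isClosed_graph ?_, continuous_of_isClosed_graph ?_⟩, hH⟩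
  · simpa only [hHK] using isClosed_setOfPred_contact hF.isC1 hG.isC1
  · simpa only [hKH] using isClosed_setOfPred_contact hG.isC1 hF.isC1

end Matching

section Diffeo

variable {F G : Circ → ℝ × ℝ}

theorem IsC1.eventually_eq_of_apply_eq {φ h : ℝ → ℝ} {t : ℝ} (hG : IsC1 G)
    (hvel : velocity G (h t) ≠ 0) (hφ : ContinuousAt φ t) (hh : ContinuousAt h t)
    (hφh : φ t = h t) (hGφh : ∀ᶠ s in 𝓝 t, G (φ s) = G (h s)) : φ =ᶠ[𝓝 t] h := by
  have hpair : Tendsto (fun s => (φ s, h s)) (𝓝 t) (𝓝 (h t, h t)) :=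
    (hφh ▸ hφ.tendsto).prodMk_nhds hh
  filter_upwards [hGφh, hpair.eventually
    (eventually_eq_of_hasStrictDerivAt (hG.hasStrictDerivAt (h t)) hvel)] with s hs hinj
  exact hinj hs

theorem CleanImmersion.circleDiffeo_of_contact (hF : CleanImmersion F) (hG : CleanImmersion G)
    (hFG : ObliqueContact F G) (hGF : ObliqueContact G F) (e : Circ ≃ₜ Circ)
    (he : ∀ x, Contact F G x (e x)) : CircleDiffeo e := by
  obtain ⟨h, hh, heh, hperiod⟩ := exists_lift_of_homeomorph two_pi_pos.ne' e
  have hcontact (t : ℝ) : Contact F G t (h t) := heh t ▸ he t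
  have hC1 : ContDiff ℝ 1 h := contDiff_iff_contDiffAt.2 fun t => by
    obtain ⟨φ, hφ, hφt, hFφ⟩ := hF.exists_contDiffAt_contact hG hFG hGF (hcontact t)
    refine hφ.congr_of_eventuallyEq (hG.isC1.eventually_eq_of_apply_eq (hG.velocity_ne_zero _)
      hφ.continuousAt hh.continuousAt hφt ?_).symm
    exact hFφ.mono fun s hs => hs.1.symm.trans (hcontact s).1
  refine ⟨h, hC1, fun t ht => hF.velocity_ne_zero t ?_, hperiod, heh⟩
  have hderiv : HasDerivAt (liftOf G ∘ h) (deriv h t • velocity G (h t)) t :=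
    (hG.isC1.hasDerivAt (h t)).scomp t (hC1.differentiable one_ne_zero t).hasDerivAt
  have hcomp : liftOf G ∘ h = liftOf F := funext fun s => (hcontact s).1.symm
  rw [hcomp, ht, zero_smul] at hderiv
  exact (hF.isC1.hasDerivAt t).unique hderiv

theorem CleanImmersion.exists_circleDiffeo (hF : CleanImmersion F) (hG : CleanImmersion G)
    (h : SamePersistence F G)
    (hrefl : SamePersistence (reflectFst ∘ F) (reflectFst ∘ G)) :
    ∃ H : Circ → Circ, CircleDiffeo H ∧ ∀ x, G (H x) = F x := by
  have hFG := h.obliqueContact hrefl hF hG.isC1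
  have hGF := h.symm.obliqueContact hrefl.symm hG hF.isC1
  obtain ⟨e, he⟩ := hF.exists_homeomorph_contact hG hFG hGF
  exact ⟨e, hF.circleDiffeo_of_contact hG hFG hGF e he, fun x => (he x).1.symm⟩

end Diffeo

theorem approx_uniqueness_general (F G : Circ → ℝ × ℝ) (hF : Bornology.IsBounded (range F))
    (hG : Bornology.IsBounded (range G)) (F' G' : Circ → ℝ × ℝ) (hF' : CleanImmersion F')
    (hG' : CleanImmersion G') (h : SamePersistence F' G')
    (hrefl : SamePersistence (reflectFst ∘ F') (reflectFst ∘ G')) :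
    ∃ H : Circ → Circ, CircleDiffeo H ∧
      (⨆ x : Circ, ‖G (H x) - F x‖) ≤
        (⨆ x : Circ, ‖G x - G' x‖) + (⨆ x : Circ, ‖F' x - F x‖) := by
  obtain ⟨H, hH, hcomp⟩ := hF'.exists_circleDiffeo hG' h hrefl
  exact ⟨H, hH, iSup_norm_comp_sub_le hcomp
    (bddAbove_range_norm_sub hG (isCompact_range hG'.isC1.continuous).isBounded)
    (bddAbove_range_norm_sub (isCompact_range hF'.isC1.continuous).isBounded hF)⟩

/-- Corollary: if continuous `f, g` are approximated by generic `f', g'` whose persistent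
Betti numbers (after composing with every reflection in `Σ₂`) coincide on `Δ⁺`, then
there is a C¹-diffeomorphism `h` of the circle with
`‖g∘h − f‖_∞ ≤ ‖g − g'‖_∞ + ‖f' − f‖_∞`. -/
theorem approx_uniqueness (F G : Circ → ℝ × ℝ) (hF : Continuous F) (hG : Continuous G)
    (F' G' : Circ → ℝ × ℝ) (hF' : Generic F') (hG' : Generic G')
    (h : ∀ s ∈ Sigma2, ∀ u v : ℝ × ℝ, u.1 < v.1 → u.2 < v.2 →
      persBetti (s ∘ F') u v = persBetti (s ∘ G') u v) :
    ∃ H : Circ → Circ, CircleDiffeo H ∧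
      (⨆ x : Circ, ‖G (H x) - F x‖) ≤
        (⨆ x : Circ, ‖G x - G' x‖) + (⨆ x : Circ, ‖F' x - F x‖) := by
  exact approx_uniqueness_general F G (isCompact_range hF).isBounded (isCompact_range hG).isBounded
    F' G' hF'.cleanImmersion hG'.cleanImmersion (h id (mem_insert _ _))
    (h reflectFst (mem_insert_of_mem _ (mem_insert _ _)))
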